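/- Let I ⊂ R and J ⊂ T be nonzero proper monomial ideals, identified with their extensions to S = R ⊗_K T, let k ≥ 1, and let p ⊂ R and q ⊂ T be nonzero monomial prime ideals such that p + q ∈ Ass((I+J)^k) (computed in S). Then v_{p+q}((I+J)^k) = min{ v_p(I^{k−ℓ}) + v_q(J^{ℓ+1}) : 0 ≤ ℓ < k, p ∈ Ass(I^{k−ℓ}), q ∈ Ass(J^{ℓ+1}) }, where v_p(I^{k−ℓ}) is computed in R, v_q(J^{ℓ+1}) is computed in T, and v_{p+q}((I+J)^k) is computed in S. -/

import Mathlib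

open MvPolynomial

noncomputable section

/-- The set of associated primes `Ass(L)` of the quotient by an ideal `L`. -/
def assOf {A : Type} [CommRing A] (L : Ideal A) : Set (Ideal A) :=
  associatedPrimes A (A ⧸ L)

/-- `𝔄` is the stable value `Ass^∞(L)` of `Ass(L^k)` for all large `k`. -/
def IsStableAssValue {A : Type} [CommRing A] (L : Ideal A) (𝔄 : Set (Ideal A)) : Prop :=
  ∃ N : ℕ, ∀ k : ℕ, N ≤ k → assOf (L ^ k) = 𝔄

/-- `Ass^*(L) = ⋃_{k ≥ 1} Ass(L^k)`. -/
def assStar {A : Type} [CommRing A] (L : Ideal A) : Set (Ideal A) :=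
  {p | ∃ k : ℕ, 1 ≤ k ∧ p ∈ assOf (L ^ k)}

/-- The local v-number `v_p(L)`: the least degree of a homogeneous `f` with `(L : f) = p`. -/
def vnum {σ K : Type} [Field K] (L p : Ideal (MvPolynomial σ K)) : ℕ :=
  sInf {d : ℕ | ∃ f : MvPolynomial σ K, f.IsHomogeneous d ∧ L.colon (Ideal.span {f}) = p}

/-- The v-number `v(L) = min_{p ∈ Ass(L)} v_p(L)`. -/
def vnumber {σ K : Type} [Field K] (L : Ideal (MvPolynomial σ K)) : ℕ :=
  sInf {d : ℕ | ∃ p ∈ assOf L, ∃ f : MvPolynomial σ K,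
    f.IsHomogeneous d ∧ L.colon (Ideal.span {f}) = p}

/-- The initial degree `α(L)`: the least `d` such that `L` contains a nonzero
homogeneous element of degree `d`. -/
def alphaDeg {σ K : Type} [Field K] (L : Ideal (MvPolynomial σ K)) : ℕ :=
  sInf {d : ℕ | ∃ f ∈ L, f ≠ 0 ∧ MvPolynomial.IsHomogeneous f d}

/-- A graded (homogeneous) ideal: one containing all homogeneous components
of each of its elements. -/
def IsGradedIdeal {σ K : Type} [Field K] (I : Ideal (MvPolynomial σ K)) : Prop :=
  ∀ f ∈ I, ∀ d : ℕ, homogeneousComponent d f ∈ I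

/-- A monomial ideal: an ideal generated by monomials. -/
def IsMonomialIdeal {σ K : Type} [Field K] (I : Ideal (MvPolynomial σ K)) : Prop :=
  ∃ G : Set (σ →₀ ℕ), I = Ideal.span ((fun a => (monomial a (1 : K))) '' G)

theorem IsMonomialIdeal.mem_iff {σ K : Type} [Field K] {L : Ideal (MvPolynomial σ K)}
    (hL : IsMonomialIdeal L) {f : MvPolynomial σ K} :
    f ∈ L ↔ ∀ a ∈ f.support, monomial a (1 : K) ∈ L := by
  classical
  obtain ⟨G, rfl⟩ := hL
  simp only [mem_ideal_span_monomial_image]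
  refine forall₂_congr fun a _ => ?_
  simp [support_monomial]

theorem monomial_add_mem {σ K : Type} [Field K] {L M : Ideal (MvPolynomial σ K)}
    {a b : σ →₀ ℕ} (ha : monomial a (1 : K) ∈ L) (hb : monomial b (1 : K) ∈ M) :
    monomial (a + b) (1 : K) ∈ L * M := by
  simpa [monomial_mul] using Ideal.mul_mem_mul ha hb

theorem monomial_add_mem_left {σ K : Type} [Field K] {L : Ideal (MvPolynomial σ K)}
    {a : σ →₀ ℕ} (b : σ →₀ ℕ) (ha : monomial a (1 : K) ∈ L) :
    monomial (a + b) (1 : K) ∈ L := by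
  simpa [monomial_mul] using L.mul_mem_right (monomial b (1 : K)) ha

theorem span_monomial_mul_span_monomial {σ K : Type} [Field K] (G H : Set (σ →₀ ℕ)) :
    Ideal.span ((fun a => (monomial a (1 : K))) '' G) *
        Ideal.span ((fun a => (monomial a (1 : K))) '' H) =
      Ideal.span ((fun a => (monomial a (1 : K))) '' Set.image2 (· + ·) G H) := by
  rw [Ideal.span_mul_span', ← Set.image2_mul, Set.image2_image_left, Set.image2_image_right,
    Set.image_image2]
  simp [monomial_mul]

theorem IsMonomialIdeal.mul {σ K : Type} [Field K] {L M : Ideal (MvPolynomial σ K)}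
    (hL : IsMonomialIdeal L) (hM : IsMonomialIdeal M) : IsMonomialIdeal (L * M) := by
  obtain ⟨G, rfl⟩ := hL
  obtain ⟨H, rfl⟩ := hM
  exact ⟨_, span_monomial_mul_span_monomial G H⟩

theorem IsMonomialIdeal.pow {σ K : Type} [Field K] {L : Ideal (MvPolynomial σ K)}
    (hL : IsMonomialIdeal L) (k : ℕ) : IsMonomialIdeal (L ^ k) := by
  induction k with
  | zero => exact ⟨{0}, by simp [Ideal.one_eq_top]⟩
  | succ k ih => rw [pow_succ]; exact ih.mul hL

theorem IsMonomialIdeal.add {σ K : Type} [Field K] {L M : Ideal (MvPolynomial σ K)}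
    (hL : IsMonomialIdeal L) (hM : IsMonomialIdeal M) : IsMonomialIdeal (L + M) := by
  obtain ⟨G, rfl⟩ := hL
  obtain ⟨H, rfl⟩ := hM
  exact ⟨G ∪ H, by rw [Set.image_union, Ideal.span_union, Submodule.add_eq_sup]⟩

theorem IsMonomialIdeal.monomial_mem_mul {σ K : Type} [Field K]
    {L M : Ideal (MvPolynomial σ K)} (hL : IsMonomialIdeal L) (hM : IsMonomialIdeal M)
    {a : σ →₀ ℕ} (ha : monomial a (1 : K) ∈ L * M) :
    ∃ b c, a = b + c ∧ monomial b (1 : K) ∈ L ∧ monomial c (1 : K) ∈ M := by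
  classical
  obtain ⟨G, rfl⟩ := hL
  obtain ⟨H, rfl⟩ := hM
  rw [span_monomial_mul_span_monomial, mem_ideal_span_monomial_image] at ha
  obtain ⟨_, ⟨g, hg, h, hh, rfl⟩, hle⟩ := ha a (by simp [support_monomial])
  obtain ⟨r, rfl⟩ := le_iff_exists_add.mp hle
  exact ⟨g, h + r, by simp [add_assoc], Ideal.subset_span ⟨g, hg, rfl⟩,
    monomial_add_mem_left r (Ideal.subset_span ⟨h, hh, rfl⟩)⟩

theorem IsMonomialIdeal.monomial_mem_add {σ K : Type} [Field K]
    {L M : Ideal (MvPolynomial σ K)} (hL : IsMonomialIdeal L) (hM : IsMonomialIdeal M)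
    {a : σ →₀ ℕ} (ha : monomial a (1 : K) ∈ L + M) :
    monomial a (1 : K) ∈ L ∨ monomial a (1 : K) ∈ M := by
  classical
  obtain ⟨f, hf, g, hg, hfg⟩ := Submodule.mem_sup.mp ha
  have hne : coeff a f + coeff a g ≠ 0 := by
    rw [← coeff_add, hfg]; simp
  by_cases h : coeff a f = 0
  · exact Or.inr (hM.mem_iff.mp hg a (mem_support_iff.mpr fun h' => hne (by simp [h, h'])))
  · exact Or.inl (hL.mem_iff.mp hf a (mem_support_iff.mpr h))

/-- Dividing a monomial of `L ^ (k + 1)` by a variable leaves a monomial of `L ^ k`. -/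
theorem IsMonomialIdeal.monomial_mem_pow_of_single_add {σ K : Type} [Field K]
    {L : Ideal (MvPolynomial σ K)} (hL : IsMonomialIdeal L) (i : σ) (k : ℕ) (v : σ →₀ ℕ)
    (h : monomial (Finsupp.single i 1 + v) (1 : K) ∈ L ^ (k + 1)) :
    monomial v (1 : K) ∈ L ^ k := by
  induction k generalizing v with
  | zero => simp
  | succ k ih =>
    rw [pow_succ] at h
    obtain ⟨a, c, hac, ha, hc⟩ := (hL.pow (k + 1)).monomial_mem_mul hL h
    have split : ∀ w : σ →₀ ℕ, w i ≠ 0 → ∃ w', w = Finsupp.single i 1 + w' := fun w hw =>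
      le_iff_exists_add.mp (by simpa using Nat.one_le_iff_ne_zero.mpr hw)
    by_cases hai : a i = 0
    · have hci : c i ≠ 0 := by
        have := DFunLike.congr_fun hac i
        simp [hai] at this
        omega
      obtain ⟨c', rfl⟩ := split c hci
      have hv : v = a + c' := by
        rw [add_left_comm] at hac
        exact add_left_cancel hac
      rw [hv]
      exact monomial_add_mem_left c' ha
    · obtain ⟨a', rfl⟩ := split a hai
      have hv : v = a' + c := by
        rw [add_assoc] at hac
        exact add_left_cancel hac
      rw [hv, pow_succ]
      exact monomial_add_mem (ih a' ha) hc

/-- The exponents `a` for which the monomial ideal `(L : x^a)` is generated by the variables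
in `A`. -/
def colonExponents {σ K : Type} [Field K] (L : Ideal (MvPolynomial σ K)) (A : Set σ) :
    Set (σ →₀ ℕ) :=
  {a | ∀ b, monomial (a + b) (1 : K) ∈ L ↔ ∃ i ∈ A, b i ≠ 0}

theorem monomial_mem_span_X {σ K : Type} [Field K] {A : Set σ} {b : σ →₀ ℕ} :
    monomial b (1 : K) ∈ Ideal.span ((fun i => (X i : MvPolynomial σ K)) '' A) ↔
      ∃ i ∈ A, b i ≠ 0 := by
  classical
  rw [mem_ideal_span_X_image]
  simp [support_monomial]

theorem colon_monomial_eq_of_mem_colonExponents {σ K : Type} [Field K]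
    {L : Ideal (MvPolynomial σ K)} (hL : IsMonomialIdeal L) {A : Set σ} {a : σ →₀ ℕ}
    (ha : a ∈ colonExponents L A) :
    L.colon (Ideal.span {monomial a (1 : K)}) =
      Ideal.span ((fun i => (X i : MvPolynomial σ K)) '' A) := by
  classical
  ext f
  rw [Ideal.mem_colon_span_singleton, hL.mem_iff, mem_ideal_span_X_image]
  constructor
  · intro h b hb
    refine (ha b).mp (h (a + b) ?_)
    rw [mem_support_iff, add_comm, coeff_mul_monomial]
    simpa using hb
  · intro h c hc
    rw [mem_support_iff, coeff_mul_monomial'] at hc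
    split_ifs at hc with hle
    · obtain ⟨b, rfl⟩ := le_iff_exists_add.mp hle
      exact (ha b).mpr (h b (by simpa using hc))
    · exact absurd rfl hc

theorem exists_mem_colonExponents_of_colon_eq {σ K : Type} [Field K]
    {L : Ideal (MvPolynomial σ K)} (hL : IsMonomialIdeal L) {A : Set σ} {f : MvPolynomial σ K}
    (hf : L.colon (Ideal.span {f}) =
      Ideal.span ((fun i => (X i : MvPolynomial σ K)) '' A)) :
    ∃ a ∈ f.support, a ∈ colonExponents L A := by
  classical
  have hcolon : ∀ b : σ →₀ ℕ,
      (∀ a ∈ f.support, monomial (a + b) (1 : K) ∈ L) ↔ ∃ i ∈ A, b i ≠ 0 := by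
    intro b
    rw [← monomial_mem_span_X (K := K), ← hf, Ideal.mem_colon_span_singleton, hL.mem_iff]
    constructor
    · intro h c hc
      rw [mem_support_iff, coeff_monomial_mul'] at hc
      split_ifs at hc with hle
      · obtain ⟨a, rfl⟩ := le_iff_exists_add.mp hle
        rw [add_comm]
        exact h a (by simpa using hc)
      · exact absurd rfl hc
    · intro h a ha
      refine h (a + b) ?_
      rw [mem_support_iff, add_comm, coeff_monomial_mul]
      simpa using ha
  by_contra! hno
  have hout : ∀ a ∈ f.support, ∃ b : σ →₀ ℕ,
      monomial (a + b) (1 : K) ∈ L ∧ ¬ ∃ i ∈ A, b i ≠ 0 := by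
    intro a ha
    by_contra! hall
    exact hno a ha fun b => ⟨fun h => hall b h, fun h => (hcolon b).mpr h a ha⟩
  choose! g hg hgA using hout
  obtain ⟨i, hi, hne⟩ := (hcolon (∑ a ∈ f.support, g a)).mp fun a ha => by
    rw [← Finset.add_sum_erase _ _ ha, ← add_assoc]
    exact monomial_add_mem_left _ (hg a ha)
  refine hne ?_
  rw [Finsupp.finsetSum_apply]
  refine Finset.sum_eq_zero fun a ha => ?_
  by_contra h
  exact hgA a ha ⟨i, hi, h⟩

theorem vnum_eq_sInf_degree {σ K : Type} [Field K] {L : Ideal (MvPolynomial σ K)}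
    (hL : IsMonomialIdeal L) (A : Set σ) :
    vnum L (Ideal.span ((fun i => (X i : MvPolynomial σ K)) '' A)) =
      sInf (Finsupp.degree '' colonExponents L A) := by
  unfold vnum
  congr 1
  ext d
  constructor
  · rintro ⟨f, hfd, hf⟩
    obtain ⟨a, ha, haW⟩ := exists_mem_colonExponents_of_colon_eq hL hf
    refine ⟨a, haW, ?_⟩
    by_contra hne
    exact mem_support_iff.mp ha (hfd.coeff_eq_zero hne)
  · rintro ⟨a, ha, rfl⟩
    exact ⟨monomial a 1, isHomogeneous_monomial _ rfl,
      colon_monomial_eq_of_mem_colonExponents hL ha⟩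

theorem isPrime_span_X_image {σ K : Type} [Field K] (A : Set σ) :
    (Ideal.span ((fun i => (X i : MvPolynomial σ K)) '' A)).IsPrime := by
  classical
  set P := Ideal.span ((fun i => (X i : MvPolynomial σ K)) '' A)
  let φ : MvPolynomial σ K →ₐ[K] MvPolynomial σ K := aeval fun i => if i ∈ A then 0 else X i
  have hφ : (Ideal.Quotient.mkₐ K P).comp φ = Ideal.Quotient.mkₐ K P := by
    ext i
    by_cases hi : i ∈ A
    · have hX : (X i : MvPolynomial σ K) ∈ P := Ideal.subset_span ⟨i, hi, rfl⟩
      simp [φ, hi, Ideal.Quotient.eq_zero_iff_mem.mpr hX]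
    · simp [φ, hi]
  have hker : P = RingHom.ker φ := by
    refine le_antisymm (Ideal.span_le.mpr ?_) fun f hf => ?_
    · rintro _ ⟨i, hi, rfl⟩
      simp [φ, hi]
    · rw [← Ideal.Quotient.eq_zero_iff_mem]
      have := DFunLike.congr_fun hφ f
      rw [AlgHom.comp_apply, RingHom.mem_ker.mp hf, map_zero] at this
      exact this.symm
  rw [hker]
  exact RingHom.ker_isPrime φ

theorem mem_assOf_iff_nonempty_colonExponents {σ K : Type} [Field K] [Finite σ]
    {L : Ideal (MvPolynomial σ K)} (hL : IsMonomialIdeal L) (A : Set σ) :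
    Ideal.span ((fun i => (X i : MvPolynomial σ K)) '' A) ∈ assOf L ↔
      (colonExponents L A).Nonempty := by
  have hmk : ∀ f : MvPolynomial σ K,
      Submodule.colon (⊥ : Submodule (MvPolynomial σ K) (MvPolynomial σ K ⧸ L))
        {Ideal.Quotient.mk L f} = L.colon (Ideal.span {f}) := by
    intro f
    ext r
    rw [Submodule.mem_colon_singleton, Ideal.mem_colon_span_singleton, Submodule.mem_bot,
      ← Ideal.Quotient.eq_zero_iff_mem, map_mul]
    rfl
  rw [assOf, AssociatedPrimes.mem_iff, isAssociatedPrime_iff]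
  constructor
  · rintro ⟨-, x, hx⟩
    obtain ⟨f, rfl⟩ := Ideal.Quotient.mk_surjective x
    obtain ⟨a, -, ha⟩ := exists_mem_colonExponents_of_colon_eq hL ((hmk f).symm.trans hx.symm)
    exact ⟨a, ha⟩
  · rintro ⟨a, ha⟩
    exact ⟨isPrime_span_X_image A, _, ((hmk _).trans
      (colon_monomial_eq_of_mem_colonExponents hL ha)).symm⟩

theorem map_rename_span_monomial {σ τ K : Type} [Field K] (φ : σ → τ) (G : Set (σ →₀ ℕ)) :
    Ideal.map (rename φ) (Ideal.span ((fun a => (monomial a (1 : K))) '' G)) =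
      Ideal.span ((fun a => (monomial a (1 : K))) '' (Finsupp.mapDomain φ '' G)) := by
  rw [Ideal.map_span, Set.image_image, Set.image_image]
  simp [rename_monomial]

theorem IsMonomialIdeal.map_rename {σ τ K : Type} [Field K] (φ : σ → τ)
    {L : Ideal (MvPolynomial σ K)} (hL : IsMonomialIdeal L) :
    IsMonomialIdeal (Ideal.map (rename φ) L) := by
  obtain ⟨G, rfl⟩ := hL
  exact ⟨_, map_rename_span_monomial φ G⟩

theorem IsMonomialIdeal.monomial_mem_map_inl {σ τ K : Type} [Field K]
    {L : Ideal (MvPolynomial σ K)} (hL : IsMonomialIdeal L) {u : σ →₀ ℕ} {v : τ →₀ ℕ}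
    (h : monomial (u.sumElim v) (1 : K) ∈ Ideal.map (rename Sum.inl) L) :
    monomial u (1 : K) ∈ L := by
  classical
  obtain ⟨G, rfl⟩ := hL
  rw [map_rename_span_monomial, mem_ideal_span_monomial_image] at h
  obtain ⟨_, ⟨g, hg, rfl⟩, hle⟩ := h (u.sumElim v) (by simp [support_monomial])
  obtain ⟨r, rfl⟩ : ∃ r, u = g + r := le_iff_exists_add.mp fun i => by
    simpa [Finsupp.mapDomain_apply Sum.inl_injective] using hle (Sum.inl i)
  exact monomial_add_mem_left r (Ideal.subset_span ⟨g, hg, rfl⟩)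

theorem IsMonomialIdeal.monomial_mem_map_inr {σ τ K : Type} [Field K]
    {L : Ideal (MvPolynomial τ K)} (hL : IsMonomialIdeal L) {u : σ →₀ ℕ} {v : τ →₀ ℕ}
    (h : monomial (u.sumElim v) (1 : K) ∈ Ideal.map (rename Sum.inr) L) :
    monomial v (1 : K) ∈ L := by
  classical
  obtain ⟨G, rfl⟩ := hL
  rw [map_rename_span_monomial, mem_ideal_span_monomial_image] at h
  obtain ⟨_, ⟨g, hg, rfl⟩, hle⟩ := h (u.sumElim v) (by simp [support_monomial])
  obtain ⟨r, rfl⟩ : ∃ r, v = g + r := le_iff_exists_add.mp fun i => by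
    simpa [Finsupp.mapDomain_apply Sum.inr_injective] using hle (Sum.inr i)
  exact monomial_add_mem_left r (Ideal.subset_span ⟨g, hg, rfl⟩)

theorem exists_eq_sumElim {σ τ : Type} (w : σ ⊕ τ →₀ ℕ) :
    ∃ (u : σ →₀ ℕ) (v : τ →₀ ℕ), w = u.sumElim v :=
  ⟨_, _, (Finsupp.comapDomain_sumElim_comapDomain w).symm⟩

/-- A monomial `x^u y^v` lies in `(I + J)^k` iff `x^u ∈ I^i` and `y^v ∈ J^j` for some
`i + j = k`. -/
theorem monomial_sumElim_mem_pow_iff {σ τ K : Type} [Field K]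
    {I : Ideal (MvPolynomial σ K)} {J : Ideal (MvPolynomial τ K)}
    (hI : IsMonomialIdeal I) (hJ : IsMonomialIdeal J) (k : ℕ) (u : σ →₀ ℕ) (v : τ →₀ ℕ) :
    monomial (u.sumElim v) (1 : K) ∈
        (Ideal.map (rename Sum.inl) I + Ideal.map (rename Sum.inr) J) ^ k ↔
      ∃ i j, i + j = k ∧ monomial u (1 : K) ∈ I ^ i ∧ monomial v (1 : K) ∈ J ^ j := by
  have hI' := hI.map_rename (Sum.inl : σ → σ ⊕ τ)
  have hJ' := hJ.map_rename (Sum.inr : τ → σ ⊕ τ)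
  constructor
  · intro h
    induction k generalizing u v with
    | zero => exact ⟨0, 0, by simp⟩
    | succ k ih =>
      rw [pow_succ] at h
      obtain ⟨b, c, hbc, hb, hc⟩ := ((hI'.add hJ').pow k).monomial_mem_mul (hI'.add hJ') h
      obtain ⟨b₁, b₂, rfl⟩ := exists_eq_sumElim b
      obtain ⟨c₁, c₂, rfl⟩ := exists_eq_sumElim c
      rw [← Finsupp.sumElim_add] at hbc
      obtain rfl : u = b₁ + c₁ := by
        ext i; simpa using DFunLike.congr_fun hbc (Sum.inl i)
      obtain rfl : v = b₂ + c₂ := by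
        ext i; simpa using DFunLike.congr_fun hbc (Sum.inr i)
      obtain ⟨i, j, hij, hi, hj⟩ := ih b₁ b₂ hb
      rcases hI'.monomial_mem_add hJ' hc with hc | hc
      · refine ⟨i + 1, j, by omega, ?_, monomial_add_mem_left _ hj⟩
        rw [pow_succ]
        exact monomial_add_mem hi (hI.monomial_mem_map_inl hc)
      · refine ⟨i, j + 1, by omega, monomial_add_mem_left _ hi, ?_⟩
        rw [pow_succ]
        exact monomial_add_mem hj (hJ.monomial_mem_map_inr hc)
  · rintro ⟨i, j, rfl, hi, hj⟩
    rw [pow_add, Finsupp.sumElim_eq_add]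
    refine monomial_add_mem (Ideal.pow_right_mono (le_sup_left) i ?_)
      (Ideal.pow_right_mono (le_sup_right) j ?_)
    · rw [← Ideal.map_pow]
      simpa [rename_monomial] using Ideal.mem_map_of_mem (rename Sum.inl) hi
    · rw [← Ideal.map_pow]
      simpa [rename_monomial] using Ideal.mem_map_of_mem (rename Sum.inr) hj

theorem map_span_X_add_map_span_X {σ τ K : Type} [Field K] (A : Set σ) (B : Set τ) :
    Ideal.map (rename Sum.inl) (Ideal.span ((fun i => (X i : MvPolynomial σ K)) '' A)) +
        Ideal.map (rename Sum.inr) (Ideal.span ((fun i => (X i : MvPolynomial τ K)) '' B)) =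
      Ideal.span ((fun i => (X i : MvPolynomial (σ ⊕ τ) K)) '' (Sum.inl '' A ∪ Sum.inr '' B)) := by
  rw [Ideal.map_span, Ideal.map_span, Set.image_union, Ideal.span_union, Submodule.add_eq_sup]
  simp [Set.image_image]

/-- The exponents realizing `p + q` as a colon of `(I + J)^k` are the pairs of exponents
realizing `p` as a colon of `I^(k - ℓ)` and `q` as a colon of `J^(ℓ + 1)`. -/
theorem sumElim_mem_colonExponents_iff {σ τ K : Type} [Field K]
    {I : Ideal (MvPolynomial σ K)} {J : Ideal (MvPolynomial τ K)}
    (hI : IsMonomialIdeal I) (hJ : IsMonomialIdeal J) (k : ℕ)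
    {A : Set σ} (hA : A.Nonempty) {B : Set τ} (hB : B.Nonempty) (u : σ →₀ ℕ) (v : τ →₀ ℕ) :
    u.sumElim v ∈ colonExponents
        ((Ideal.map (rename Sum.inl) I + Ideal.map (rename Sum.inr) J) ^ k)
        (Sum.inl '' A ∪ Sum.inr '' B) ↔
      ∃ ℓ < k, u ∈ colonExponents (I ^ (k - ℓ)) A ∧ v ∈ colonExponents (J ^ (ℓ + 1)) B := by
  have hpair : u.sumElim v ∈ colonExponents
        ((Ideal.map (rename Sum.inl) I + Ideal.map (rename Sum.inr) J) ^ k)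
        (Sum.inl '' A ∪ Sum.inr '' B) ↔
      ∀ (b : σ →₀ ℕ) (c : τ →₀ ℕ), (∃ i j, i + j = k ∧ monomial (u + b) (1 : K) ∈ I ^ i ∧
        monomial (v + c) (1 : K) ∈ J ^ j) ↔ (∃ i ∈ A, b i ≠ 0) ∨ ∃ i ∈ B, c i ≠ 0 := by
    constructor
    · intro h b c
      rw [← monomial_sumElim_mem_pow_iff hI hJ, Finsupp.sumElim_add, h]
      simp [or_and_right, exists_or]
    · intro h w
      obtain ⟨b, c, rfl⟩ := exists_eq_sumElim w
      rw [← Finsupp.sumElim_add, monomial_sumElim_mem_pow_iff hI hJ, h]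
      simp [or_and_right, exists_or]
  rw [hpair]
  constructor
  · intro h
    classical
    have hk : ¬ ∃ c : τ →₀ ℕ, (¬ ∃ i ∈ B, c i ≠ 0) ∧ monomial (v + c) (1 : K) ∈ J ^ k := by
      rintro ⟨c, hc, hmem⟩
      have := (h 0 c).mp ⟨0, k, by simp, by simp, hmem⟩
      exact hc (this.resolve_left (by simp))
    have hex : ∃ t, ¬ ∃ c : τ →₀ ℕ,
        (¬ ∃ i ∈ B, c i ≠ 0) ∧ monomial (v + c) (1 : K) ∈ J ^ t := ⟨k, hk⟩
    obtain ⟨ℓ, hℓ⟩ : ∃ ℓ, Nat.find hex = ℓ + 1 := by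
      refine Nat.exists_eq_succ_of_ne_zero fun h0 => ?_
      have := Nat.find_spec hex
      rw [h0] at this
      exact this ⟨0, by simp, by simp⟩
    have hmax := Nat.find_spec hex
    rw [hℓ] at hmax
    have hℓk : ℓ < k := by
      have := Nat.find_min' hex hk
      omega
    obtain ⟨c₀, hc₀, hmem₀⟩ := not_not.mp (Nat.find_min hex (m := ℓ) (by omega))
    refine ⟨ℓ, hℓk, fun b => ⟨fun hb => ?_, fun hb => ?_⟩, fun c => ⟨fun hc => ?_, fun hc => ?_⟩⟩
    · exact ((h b c₀).mp ⟨k - ℓ, ℓ, by omega, hb, hmem₀⟩).resolve_right hc₀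
    · obtain ⟨i, j, hij, hi, hj⟩ := (h b 0).mpr (Or.inl hb)
      by_cases hle : k - ℓ ≤ i
      · exact Ideal.pow_le_pow_right hle hi
      · exact absurd ⟨0, by simp, Ideal.pow_le_pow_right (by omega) hj⟩ hmax
    · by_contra hcB
      exact hmax ⟨c, hcB, hc⟩
    · obtain ⟨i, j, hij, hi, hj⟩ := (h 0 c).mpr (Or.inr hc)
      by_cases hle : ℓ + 1 ≤ j
      · exact Ideal.pow_le_pow_right hle hj
      · have := (h 0 c₀).mp ⟨k - ℓ, ℓ, by omega, Ideal.pow_le_pow_right (by omega) hi, hmem₀⟩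
        exact absurd (this.resolve_left (by simp)) hc₀
  · rintro ⟨ℓ, hℓk, hu, hv⟩ b c
    have hu' : monomial u (1 : K) ∈ I ^ (k - ℓ - 1) := by
      obtain ⟨i, hi⟩ := hA
      refine hI.monomial_mem_pow_of_single_add i _ u ?_
      rw [add_comm _ u, show k - ℓ - 1 + 1 = k - ℓ by omega]
      exact (hu _).mpr ⟨i, hi, by simp⟩
    have hv' : monomial v (1 : K) ∈ J ^ ℓ := by
      obtain ⟨i, hi⟩ := hB
      refine hJ.monomial_mem_pow_of_single_add i _ v ?_
      rw [add_comm _ v]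
      exact (hv _).mpr ⟨i, hi, by simp⟩
    constructor
    · rintro ⟨i, j, hij, hi, hj⟩
      by_cases hle : k - ℓ ≤ i
      · exact Or.inl ((hu b).mp (Ideal.pow_le_pow_right hle hi))
      · exact Or.inr ((hv c).mp (Ideal.pow_le_pow_right (by omega) hj))
    · rintro (hb | hc)
      · exact ⟨k - ℓ, ℓ, by omega, (hu b).mpr hb, monomial_add_mem_left c hv'⟩
      · exact ⟨k - ℓ - 1, ℓ + 1, by omega, monomial_add_mem_left b hu', (hv c).mpr hc⟩

theorem degree_sumElim {σ τ : Type} (u : σ →₀ ℕ) (v : τ →₀ ℕ) :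
    (u.sumElim v).degree = u.degree + v.degree := by
  rw [Finsupp.sumElim_eq_add, map_add, Finsupp.degree_mapDomain, Finsupp.degree_mapDomain]

/-- Theorem 4.1: for nonzero proper monomial ideals `I ⊂ R`, `J ⊂ T`
identified with their extensions to `S`, `k ≥ 1`, and nonzero monomial primes `p ⊂ R`,
`q ⊂ T` with `p + q ∈ Ass((I+J)^k)`, one has
`v_{p+q}((I+J)^k) = min{ v_p(I^{k−ℓ}) + v_q(J^{ℓ+1}) : 0 ≤ ℓ < k, p ∈ Ass(I^{k−ℓ}),
q ∈ Ass(J^{ℓ+1}) }`. -/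
theorem stmt7 {K : Type} [Field K] {n m : ℕ}
    (I : Ideal (MvPolynomial (Fin n) K)) (J : Ideal (MvPolynomial (Fin m) K))
    (hInz : I ≠ ⊥) (hIpr : I ≠ ⊤) (hImon : IsMonomialIdeal I)
    (hJnz : J ≠ ⊥) (hJpr : J ≠ ⊤) (hJmon : IsMonomialIdeal J)
    (eI eJ : Ideal (MvPolynomial (Fin n ⊕ Fin m) K))
    (heI : eI = Ideal.map (rename Sum.inl) I)
    (heJ : eJ = Ideal.map (rename Sum.inr) J)
    (k : ℕ) (hk : 1 ≤ k)
    -- `p ⊂ R`, `q ⊂ T` nonzero monomial prime ideals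
    (A : Set (Fin n)) (hA : A.Nonempty) (B : Set (Fin m)) (hB : B.Nonempty)
    (p : Ideal (MvPolynomial (Fin n) K))
    (hp : p = Ideal.span ((fun i => (X i : MvPolynomial (Fin n) K)) '' A))
    (q : Ideal (MvPolynomial (Fin m) K))
    (hq : q = Ideal.span ((fun i => (X i : MvPolynomial (Fin m) K)) '' B))
    (hassoc : Ideal.map (rename Sum.inl) p + Ideal.map (rename Sum.inr) q ∈
      assOf ((eI + eJ) ^ k)) :
    vnum ((eI + eJ) ^ k) (Ideal.map (rename Sum.inl) p + Ideal.map (rename Sum.inr) q) =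
      sInf {d : ℕ | ∃ ℓ : ℕ, ℓ < k ∧ p ∈ assOf (I ^ (k - ℓ)) ∧ q ∈ assOf (J ^ (ℓ + 1)) ∧
        d = vnum (I ^ (k - ℓ)) p + vnum (J ^ (ℓ + 1)) q} := by
  subst heI heJ hp hq
  have hS : IsMonomialIdeal
      ((Ideal.map (rename (Sum.inl : Fin n → Fin n ⊕ Fin m)) I +
        Ideal.map (rename Sum.inr) J) ^ k) :=
    ((hImon.map_rename _).add (hJmon.map_rename _)).pow k
  rw [map_span_X_add_map_span_X] at hassoc ⊢
  rw [mem_assOf_iff_nonempty_colonExponents hS] at hassoc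
  rw [vnum_eq_sInf_degree hS]
  simp only [mem_assOf_iff_nonempty_colonExponents (hImon.pow _),
    mem_assOf_iff_nonempty_colonExponents (hJmon.pow _),
    vnum_eq_sInf_degree (hImon.pow _), vnum_eq_sInf_degree (hJmon.pow _)]
  apply le_antisymm
  · refine le_csInf ?_ ?_
    · obtain ⟨w, hw⟩ := hassoc
      obtain ⟨u, v, rfl⟩ := exists_eq_sumElim w
      obtain ⟨ℓ, hℓ, hu, hv⟩ :=
        (sumElim_mem_colonExponents_iff hImon hJmon k hA hB u v).mp hw
      exact ⟨_, ℓ, hℓ, ⟨u, hu⟩, ⟨v, hv⟩, rfl⟩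
    · rintro _ ⟨ℓ, hℓ, hne, hne', rfl⟩
      obtain ⟨u, hu, hud⟩ := Nat.sInf_mem (hne.image Finsupp.degree)
      obtain ⟨v, hv, hvd⟩ := Nat.sInf_mem (hne'.image Finsupp.degree)
      rw [← hud, ← hvd, ← degree_sumElim]
      exact Nat.sInf_le ⟨_, (sumElim_mem_colonExponents_iff hImon hJmon k hA hB u v).mpr
        ⟨ℓ, hℓ, hu, hv⟩, rfl⟩
  · refine le_csInf (hassoc.image _) ?_
    rintro _ ⟨w, hw, rfl⟩
    obtain ⟨u, v, rfl⟩ := exists_eq_sumElim w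
    obtain ⟨ℓ, hℓ, hu, hv⟩ :=
      (sumElim_mem_colonExponents_iff hImon hJmon k hA hB u v).mp hw
    rw [degree_sumElim]
    refine le_trans ?_ (add_le_add (Nat.sInf_le (Set.mem_image_of_mem _ hu))
      (Nat.sInf_le (Set.mem_image_of_mem _ hv)))
    exact Nat.sInf_le ⟨ℓ, hℓ, ⟨u, hu⟩, ⟨v, hv⟩, rfl⟩
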